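/- arXiv:1106.1189 — 2 statements merged into one kernel-verified Lean document; each statement's English description precedes it below -/
import Mathlib

section
/- Let k ≥ 1 be an integer, set A_j = C(2k,2j) E_{2j} E_{2k−2j} for 0 ≤ j ≤ k, and set c = π/(4(1+3^{−1−2k})). Then ∑_{j=0}^{k} |c·A_j − A_k| < |A_k|. (This is Schinzel's sufficient condition, in strict form, for the polynomial ∑_{j=0}^{k} A_j z^j to have all of its zeros on the unit circle and simple.) -/
/-- Auxiliary: `eulerEvenAux m` is the Euler number `E_{2m}`, defined via the
recurrence `∑_{j=0}^{n} C(2n,2j) E_{2j} = 0` for `n ≥ 1`, with `E_0 = 1`. -/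
def eulerEvenAux : ℕ → ℚ
  | 0 => 1
  | m + 1 => -∑ j ∈ (Finset.range (m + 1)).attach,
      ((Nat.choose (2 * (m + 1)) (2 * (j : ℕ))) : ℚ) * eulerEvenAux j
decreasing_by exact Finset.mem_range.mp j.2

/-- The Euler numbers: `E_0 = 1`, `E_n = 0` for odd `n`, and
`∑_{j=0}^{n} C(2n,2j) E_{2j} = 0` for every `n ≥ 1`. -/
def eulerE (n : ℕ) : ℚ := if n % 2 = 1 then 0 else eulerEvenAux (n / 2)

/-!
Up to the sign `(-1)^k` and a positive factor, `A_j` is the product `β(2j+1) β(2(k-j)+1)` of values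
of the Dirichlet beta function, because `β(2k+1) = (-1)^k E_{2k} (π/2)^{2k+1} / (2 (2k)!)`. The
constant `c` turns `c A_j / A_k` into `β(2j+1) β(2(k-j)+1) / ((1 + 3^{-(2k+1)}) β(2k+1))`.

The factor `1 + 3^{-s}` removes the Euler factor of `β(s)` at the prime `3`, leaving
`(1 + 3^{-s}) β(s) = 1 + 5^{-s} - 7^{-s} - ⋯ ≥ 1` for `s ≥ 2`. As `β ≤ 1`, this gives
`c A_j / A_k ≤ 1`, so all absolute values open with the same sign and the claim becomes
`k (1 + 3^{-(2k+1)}) β(2k+1) < ∑_{j ≤ k} β(2j+1) β(2(k-j)+1)`. The left side is at most `k + 2/5`.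
By `ab ≥ a + b - 1` for `a, b ≤ 1`, `β(1) = π/4` and `β(s) ≥ 1 - 3^{-s}`, the right side is at
least `k + π/2 - 13/12`, which is larger because `π > 3`.
-/

open Filter Finset Polynomial Topology
open scoped Nat Real

section FiniteSums

theorem sum_range_two_mul_add_one_of_odd_eq_zero {M : Type*} [AddCommMonoid M] {g : ℕ → M}
    (hg : ∀ i, Odd i → g i = 0) (m : ℕ) :
    ∑ i ∈ range (2 * m + 1), g i = ∑ i ∈ range (m + 1), g (2 * i) := by
  induction m with
  | zero => simp
  | succ m ih =>
    rw [show 2 * (m + 1) + 1 = 2 * m + 1 + 1 + 1 by ring, sum_range_succ, sum_range_succ, ih,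
      hg _ (odd_two_mul_add_one m), add_zero, sum_range_succ _ (m + 1)]
    rfl

section OrderedRing

variable {R : Type*} [CommRing R] [LinearOrder R] [IsStrictOrderedRing R]

theorem sum_abs_sub_lt {ι : Type*} {s : Finset ι} {f : ι → R} {a : R} (hf : ∀ i ∈ s, f i ≤ a)
    (hs : (#s - 1) * a < ∑ i ∈ s, f i) : ∑ i ∈ s, |f i - a| < a := by
  have habs : ∑ i ∈ s, |f i - a| = ∑ i ∈ s, (a - f i) :=
    sum_congr rfl fun i hi => by rw [abs_sub_comm, abs_of_nonneg (sub_nonneg.2 (hf i hi))]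
  rw [habs, sum_sub_distrib, sum_const, nsmul_eq_mul]
  linarith

theorem two_mul_sum_sub_le_sum_mul_flip {f : ℕ → R} {k : ℕ} (hf : ∀ i ≤ k, f i ≤ 1) :
    2 * ∑ j ∈ range (k + 1), f j - (k + 1) ≤ ∑ j ∈ range (k + 1), f j * f (k - j) := by
  calc 2 * ∑ j ∈ range (k + 1), f j - (k + 1)
      = ∑ j ∈ range (k + 1), (f j + f (k - j) - 1) := by
        rw [sum_sub_distrib, sum_add_distrib, sum_flip]
        simp [two_mul]
    _ ≤ ∑ j ∈ range (k + 1), f j * f (k - j) := sum_le_sum fun j hj => by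
        linarith [mul_nonneg (sub_nonneg.2 (hf j (mem_range_succ_iff.1 hj)))
          (sub_nonneg.2 (hf (k - j) (k.sub_le j)))]

end OrderedRing

end FiniteSums

section EulerNumbers

theorem eulerE_zero : eulerE 0 = 1 := by
  simp [eulerE, eulerEvenAux]

theorem eulerE_of_odd {n : ℕ} (hn : Odd n) : eulerE n = 0 :=
  if_pos (Nat.odd_iff.1 hn)

theorem eulerE_two_mul (m : ℕ) : eulerE (2 * m) = eulerEvenAux m := by
  simp [eulerE]

theorem sum_choose_mul_eulerE {m : ℕ} (hm : m ≠ 0) :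
    ∑ j ∈ range (m + 1), ((2 * m).choose (2 * j) : ℚ) * eulerE (2 * j) = 0 := by
  obtain ⟨n, rfl⟩ := Nat.exists_eq_succ_of_ne_zero hm
  simp only [eulerE_two_mul]
  rw [sum_range_succ, eulerEvenAux,
    sum_attach (range (n + 1)) fun j => ((2 * (n + 1)).choose (2 * j) : ℚ) * eulerEvenAux j]
  simp

theorem sum_choose_mul_eulerE_mul_one_add_neg_one_pow (n : ℕ) :
    ∑ i ∈ range (n + 1), (n.choose i : ℚ) * eulerE i * (1 + (-1) ^ (n - i)) =
      if n = 0 then 2 else 0 := by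
  obtain ⟨m, rfl | rfl⟩ := n.even_or_odd'
  · rw [sum_range_two_mul_add_one_of_odd_eq_zero fun i hi => by simp [eulerE_of_odd hi]]
    have hterm (j : ℕ) : (1 + (-1) ^ (2 * m - 2 * j) : ℚ) = 2 := by
      rw [← Nat.mul_sub, (even_two_mul _).neg_one_pow, one_add_one_eq_two]
    simp only [hterm, ← sum_mul]
    rcases eq_or_ne m 0 with rfl | hm
    · simp [eulerE_zero]
    · simp [sum_choose_mul_eulerE hm, hm]
  · rw [if_neg (by simp)]
    refine sum_eq_zero fun i hi => ?_
    rcases i.even_or_odd with heven | hodd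
    · have hsub : Odd (2 * m + 1 - i) :=
        Nat.Odd.sub_even (mem_range_succ_iff.1 hi) (odd_two_mul_add_one m) heven
      simp [hsub.neg_one_pow]
    · simp [eulerE_of_odd hodd]

end EulerNumbers

section GeneratingFunctions

open PowerSeries (exp rescale)

variable (K : Type*) [Field K] [CharZero K]

/-- The hyperbolic secant as a formal power series, the exponential generating function of the
Euler numbers. -/
noncomputable def sechSeries : PowerSeries K :=
  PowerSeries.mk fun n => (eulerE n : K) / (n ! : K)

theorem sechSeries_mul_exp_add_exp_neg :
    sechSeries K * (exp K + rescale (-1) (exp K)) = 2 := by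
  ext n
  have hchoose : ∀ i ∈ range (n + 1),
      (eulerE i : K) / (i ! : K) * (1 / ((n - i)! : K) + (-1) ^ (n - i) * (1 / ((n - i)! : K))) =
        (((n.choose i : ℚ) * eulerE i * (1 + (-1) ^ (n - i)) : ℚ) : K) / (n ! : K) := by
    intro i hi
    push_cast
    rw [Nat.cast_choose K (mem_range_succ_iff.1 hi)]
    field_simp [Nat.factorial_ne_zero]
  rw [PowerSeries.coeff_mul, Nat.sum_antidiagonal_eq_sum_range_succ_mk]
  simp only [sechSeries, PowerSeries.coeff_mk, map_add, PowerSeries.coeff_rescale,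
    PowerSeries.coeff_exp, map_div₀, map_one, map_natCast]
  rw [sum_congr rfl hchoose, ← sum_div, ← Rat.cast_sum,
    sum_choose_mul_eulerE_mul_one_add_neg_one_pow, ← map_ofNat (PowerSeries.C (R := K)) 2,
    PowerSeries.coeff_C]
  split_ifs with hn <;> simp [hn]

theorem rescale_sechSeries_mul_exp_add_exp_neg (a : K) :
    rescale a (sechSeries K) * (rescale a (exp K) + rescale (-a) (exp K)) = 2 := by
  have h := congrArg (rescale a) (sechSeries_mul_exp_add_exp_neg K)
  rw [map_mul, map_add, PowerSeries.rescale_rescale, neg_one_mul, map_ofNat] at h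
  exact h

/-- The exponential generating function `∑ Bₙ(t) Xⁿ / n!` of the Bernoulli polynomials at `t`, in
the form in which it appears in `Polynomial.bernoulli_generating_function`. -/
noncomputable def bernoulliSeries (t : K) : PowerSeries K :=
  PowerSeries.mk fun n => aeval t ((1 / n ! : ℚ) • Polynomial.bernoulli n)

theorem bernoulliSeries_mul_exp_sub_one (t : K) :
    bernoulliSeries K t * (exp K - 1) = PowerSeries.X * rescale t (exp K) :=
  Polynomial.bernoulli_generating_function t

-- With `u = exp (X / 4)` the difference is `X (u ^ 3 - u) / (u ^ 4 - 1) = X / (u + u⁻¹)`.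
theorem bernoulliSeries_sub_mul_exp_add_exp_neg :
    (bernoulliSeries K (3 / 4) - bernoulliSeries K (1 / 4)) *
      (rescale (1 / 4) (exp K) + rescale (-(1 / 4)) (exp K)) = PowerSeries.X := by
  set u : PowerSeries K := rescale (1 / 4) (exp K) with hu
  set v : PowerSeries K := rescale (-(1 / 4)) (exp K) with hv
  have huv : u * v = 1 := by
    rw [hu, hv, PowerSeries.exp_mul_exp_eq_exp_add]
    simp
  have hpow (m : ℕ) : rescale (m / 4 : K) (exp K) = u ^ m := by
    rw [hu, ← map_pow, PowerSeries.exp_pow_eq_rescale_exp, PowerSeries.rescale_rescale,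
      mul_one_div]
  have hu3 : rescale (3 / 4) (exp K) = u ^ 3 := by simpa using hpow 3
  have hu4 : exp K = u ^ 4 := by simpa using hpow 4
  have hne : u ^ 2 - 1 ≠ 0 := by
    intro h
    simpa [← hpow, PowerSeries.coeff_one] using congrArg (PowerSeries.coeff 1) h
  have hquarter := bernoulliSeries_mul_exp_sub_one K (1 / 4)
  have hthree := bernoulliSeries_mul_exp_sub_one K (3 / 4)
  rw [← hu, hu4] at hquarter
  rw [hu3, hu4] at hthree
  refine mul_left_cancel₀ hne ?_
  linear_combination v * hthree - v * hquarter + (PowerSeries.X * (u ^ 2 - 1) -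
    (bernoulliSeries K (3 / 4) - bernoulliSeries K (1 / 4)) * u * (u ^ 2 - 1)) * huv

theorem two_mul_bernoulliSeries_sub :
    2 * (bernoulliSeries K (3 / 4) - bernoulliSeries K (1 / 4)) =
      PowerSeries.X * rescale (1 / 4) (sechSeries K) := by
  linear_combination
    rescale (1 / 4) (sechSeries K) * bernoulliSeries_sub_mul_exp_add_exp_neg K -
      (bernoulliSeries K (3 / 4) - bernoulliSeries K (1 / 4)) *
        rescale_sechSeries_mul_exp_add_exp_neg K (1 / 4)

theorem aeval_bernoulli_three_quarters_sub_one_quarter (n : ℕ) :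
    aeval (3 / 4 : K) (Polynomial.bernoulli (n + 1)) -
        aeval (1 / 4 : K) (Polynomial.bernoulli (n + 1)) =
      (n + 1) * eulerE n / (2 * 4 ^ n) := by
  have hcoeff := congrArg (PowerSeries.coeff (n + 1)) (two_mul_bernoulliSeries_sub K)
  rw [← map_ofNat (PowerSeries.C (R := K)) 2, PowerSeries.coeff_C_mul,
    PowerSeries.coeff_succ_X_mul, PowerSeries.coeff_rescale, map_sub] at hcoeff
  simp only [bernoulliSeries, sechSeries, PowerSeries.coeff_mk, map_smul, Rat.smul_def,
    Nat.factorial_succ, one_div_pow] at hcoeff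
  push_cast at hcoeff
  have hn : (n + 1 : K) ≠ 0 := n.cast_add_one_ne_zero
  have hfact : (n ! : K) ≠ 0 := Nat.cast_ne_zero.2 n.factorial_ne_zero
  field_simp at hcoeff ⊢
  linear_combination hcoeff

end GeneratingFunctions

theorem bernoulliFun_two_mul_add_one_one_quarter (k : ℕ) :
    bernoulliFun (2 * k + 1) (1 / 4) = -((2 * k + 1) * eulerE (2 * k) / (4 * 16 ^ k)) := by
  have hsub : bernoulliFun (2 * k + 1) (3 / 4) - bernoulliFun (2 * k + 1) (1 / 4) =
      (2 * k + 1) * eulerE (2 * k) / (2 * 16 ^ k) := by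
    have h := aeval_bernoulli_three_quarters_sub_one_quarter ℝ (2 * k)
    rw [pow_mul] at h
    norm_num at h
    simpa [bernoulliFun, eval_map_algebraMap] using h
  have hsymm : bernoulliFun (2 * k + 1) (3 / 4) = -bernoulliFun (2 * k + 1) (1 / 4) := by
    have h := bernoulliFun_eval_one_sub (k := 2 * k + 1) (x := 1 / 4)
    rw [(odd_two_mul_add_one k).neg_one_pow] at h
    norm_num at h ⊢
    exact h
  rw [hsymm] at hsub
  field_simp at hsub ⊢
  linarith

section DirichletBeta

/-- The Dirichlet beta function `β(s) = ∑ (-1) ^ i / (2 i + 1) ^ s` at a natural number `s`.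
It is the limit of the partial sums and not a `tsum`, because `s = 1` is the conditionally
convergent Leibniz series; for `s = 0` the series diverges and the value is junk. -/
noncomputable def dirichletBeta (s : ℕ) : ℝ :=
  limUnder atTop fun n => ∑ i ∈ range n, (-1 : ℝ) ^ i * (1 / (2 * i + 1) ^ s)

theorem antitone_one_div_two_mul_add_one_pow (s : ℕ) :
    Antitone fun i : ℕ => 1 / (2 * i + 1 : ℝ) ^ s := fun i j hij => by
  dsimp only
  gcongr

variable {s : ℕ}

theorem tendsto_sum_dirichletBeta (hs : s ≠ 0) :
    Tendsto (fun n => ∑ i ∈ range n, (-1 : ℝ) ^ i * (1 / (2 * i + 1) ^ s)) atTop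
      (𝓝 (dirichletBeta s)) := by
  have hzero : Tendsto (fun i : ℕ => 1 / (2 * i + 1 : ℝ) ^ s) atTop (𝓝 0) := by
    simp only [one_div]
    refine (tendsto_pow_atTop hs).comp ?_ |>.inv_tendsto_atTop
    exact tendsto_atTop_add_const_right _ _
      (tendsto_natCast_atTop_atTop.const_mul_atTop two_pos)
  exact tendsto_nhds_limUnder
    ((antitone_one_div_two_mul_add_one_pow s).tendsto_alternating_series_of_tendsto_zero hzero)

theorem sum_le_dirichletBeta (hs : s ≠ 0) (n : ℕ) :
    ∑ i ∈ range (2 * n), (-1 : ℝ) ^ i * (1 / (2 * i + 1) ^ s) ≤ dirichletBeta s :=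
  (antitone_one_div_two_mul_add_one_pow s).alternating_series_le_tendsto
    (tendsto_sum_dirichletBeta hs) n

theorem dirichletBeta_le_sum (hs : s ≠ 0) (n : ℕ) :
    dirichletBeta s ≤ ∑ i ∈ range (2 * n + 1), (-1 : ℝ) ^ i * (1 / (2 * i + 1) ^ s) :=
  (antitone_one_div_two_mul_add_one_pow s).tendsto_le_alternating_series
    (tendsto_sum_dirichletBeta hs) n

theorem dirichletBeta_le_one (hs : s ≠ 0) : dirichletBeta s ≤ 1 := by
  simpa using dirichletBeta_le_sum hs 0

theorem one_sub_le_dirichletBeta (hs : s ≠ 0) : 1 - (1 / 3 : ℝ) ^ s ≤ dirichletBeta s := by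
  have h := sum_le_dirichletBeta hs 1
  norm_num [sum_range_succ] at h
  simpa [sub_eq_add_neg] using h

theorem dirichletBeta_pos (hs : s ≠ 0) : 0 < dirichletBeta s :=
  (sub_pos.2 (pow_lt_one₀ (by norm_num) (by norm_num) hs)).trans_le (one_sub_le_dirichletBeta hs)

theorem one_add_mul_dirichletBeta_le (hs : s ≠ 0) :
    (1 + (1 / 3 : ℝ) ^ s) * dirichletBeta s ≤ 1 + 2 * (1 / 5) ^ s := by
  have hbeta : dirichletBeta s ≤ 1 - (1 / 3) ^ s + (1 / 5) ^ s := by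
    have h := dirichletBeta_le_sum hs 1
    norm_num [sum_range_succ] at h
    simpa [sub_eq_add_neg] using h
  have hthree : (1 / 3 : ℝ) ^ s ≤ 1 := pow_le_one₀ (by norm_num) (by norm_num)
  have hfive : (0 : ℝ) ≤ (1 / 5) ^ s := by positivity
  calc (1 + (1 / 3 : ℝ) ^ s) * dirichletBeta s
      ≤ (1 + (1 / 3) ^ s) * (1 - (1 / 3) ^ s + (1 / 5) ^ s) := by gcongr
    _ ≤ 1 + 2 * (1 / 5) ^ s := by nlinarith [sq_nonneg ((1 / 3 : ℝ) ^ s)]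

theorem one_ninth_pow_add_one_seventh_pow_le (hs : 2 ≤ s) :
    (1 / 9 : ℝ) ^ s + (1 / 7) ^ s ≤ (1 / 5) ^ s := by
  induction s, hs using Nat.le_induction with
  | base => norm_num
  | succ s _ ih =>
    have hnine : (0 : ℝ) < (1 / 9) ^ s := by positivity
    have hseven : (0 : ℝ) < (1 / 7) ^ s := by positivity
    simp only [pow_succ]
    linarith

theorem one_le_one_add_mul_dirichletBeta (hs : 2 ≤ s) :
    1 ≤ (1 + (1 / 3 : ℝ) ^ s) * dirichletBeta s := by
  have hbeta : 1 - (1 / 3) ^ s + (1 / 5) ^ s - (1 / 7) ^ s ≤ dirichletBeta s := by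
    have h := sum_le_dirichletBeta (s := s) (by lia) 2
    norm_num [sum_range_succ] at h
    simpa [sub_eq_add_neg] using h
  have hpow := one_ninth_pow_add_one_seventh_pow_le hs
  have hnine : (1 / 9 : ℝ) ^ s = (1 / 3) ^ s * (1 / 3) ^ s := by
    rw [← mul_pow]
    norm_num
  have hthree : (0 : ℝ) < (1 / 3) ^ s := by positivity
  calc 1 ≤ (1 + (1 / 3 : ℝ) ^ s) * (1 - (1 / 3) ^ s + (1 / 5) ^ s - (1 / 7) ^ s) := by nlinarith
    _ ≤ (1 + (1 / 3) ^ s) * dirichletBeta s := by gcongr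

theorem dirichletBeta_one : dirichletBeta 1 = π / 4 := by
  refine tendsto_nhds_unique (tendsto_sum_dirichletBeta one_ne_zero) ?_
  simpa [div_eq_mul_inv] using Real.tendsto_sum_pi_div_four

theorem sin_nat_mul_pi_div_two_of_even {n : ℕ} (hn : Even n) : Real.sin (n * (π / 2)) = 0 := by
  obtain ⟨m, rfl⟩ := hn
  rw [← Real.sin_nat_mul_pi m]
  push_cast
  ring_nf

theorem sin_two_mul_add_one_mul_pi_div_two (m : ℕ) :
    Real.sin ((2 * m + 1 : ℕ) * (π / 2)) = (-1) ^ m := by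
  rw [show ((2 * m + 1 : ℕ) : ℝ) * (π / 2) = π / 2 + m * π by push_cast; ring,
    Real.sin_add_nat_mul_pi, Real.sin_pi_div_two, mul_one]

theorem dirichletBeta_two_mul_add_one_eq_bernoulliFun {k : ℕ} (hk : k ≠ 0) :
    dirichletBeta (2 * k + 1) =
      (-1) ^ (k + 1) * (2 * π) ^ (2 * k + 1) / 2 / (2 * k + 1)! *
        bernoulliFun (2 * k + 1) (1 / 4) := by
  have hsum := hasSum_one_div_nat_pow_mul_sin hk (x := 1 / 4) (by norm_num)
  have hangle (n : ℕ) : 2 * π * n * (1 / 4) = n * (π / 2) := by ring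
  have hinj : Function.Injective fun m : ℕ => 2 * m + 1 := fun a b h => by simpa using h
  simp only [hangle] at hsum
  rw [← hinj.hasSum_iff] at hsum
  · refine tendsto_nhds_unique (tendsto_sum_dirichletBeta (by simp)) ?_
    convert! hsum.tendsto_sum_nat using 4 with n i
    rw [Function.comp_apply, sin_two_mul_add_one_mul_pi_div_two]
    push_cast
    ring
  · intro n hn
    have heven : Even n := by
      rw [← Nat.not_odd_iff_even]
      rintro ⟨m, rfl⟩
      exact hn ⟨m, rfl⟩
    rw [sin_nat_mul_pi_div_two_of_even heven, mul_zero]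

theorem dirichletBeta_two_mul_add_one (k : ℕ) :
    dirichletBeta (2 * k + 1) =
      (-1) ^ k * (eulerE (2 * k) / (2 * k)!) * (π / 2) ^ (2 * k + 1) / 2 := by
  rcases eq_or_ne k 0 with rfl | hk
  · rw [mul_zero, zero_add, dirichletBeta_one]
    simp only [pow_zero, pow_one, eulerE_zero, Nat.factorial_zero, Rat.cast_one, Nat.cast_one,
      div_one, one_mul]
    ring
  · have hpow : (2 * π) ^ (2 * k + 1) = (π / 2) ^ (2 * k + 1) * (4 * 16 ^ k) := by
      rw [show 2 * π = π / 2 * 4 by ring, mul_pow, pow_succ (4 : ℝ), pow_mul (4 : ℝ)]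
      norm_num
      ring
    rw [dirichletBeta_two_mul_add_one_eq_bernoulliFun hk,
      bernoulliFun_two_mul_add_one_one_quarter, hpow, Nat.factorial_succ]
    push_cast
    field_simp
    ring

end DirichletBeta

theorem sum_one_third_pow_odd_le (k : ℕ) :
    ∑ j ∈ range k, (1 / 3 : ℝ) ^ (2 * (j + 1) + 1) ≤ 1 / 24 := by
  have hgeom : HasSum (fun j : ℕ => (1 / 3 : ℝ) ^ (2 * (j + 1) + 1)) (1 / 24) := by
    convert! (hasSum_geometric_of_lt_one (r := (1 / 9 : ℝ)) (by norm_num) (by norm_num)).mul_left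
      (1 / 27) using 1
    · funext j
      rw [show 2 * (j + 1) + 1 = 3 + 2 * j by ring, pow_add, pow_mul]
      norm_num
    · norm_num
  exact sum_le_hasSum _ (fun j _ => by positivity) hgeom

theorem mul_one_fifth_pow_le (k : ℕ) : k * (1 / 5 : ℝ) ^ (2 * k + 1) ≤ 1 / 5 := by
  have hlt : (k : ℝ) < 25 ^ k := mod_cast Nat.lt_pow_self (a := 25) (by norm_num)
  rw [pow_succ, pow_mul, show (1 / 5 : ℝ) ^ 2 = 1 / 25 by norm_num, one_div_pow]
  field_simp
  exact hlt.le

theorem mul_lt_sum_dirichletBeta_mul_dirichletBeta (k : ℕ) :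
    k * ((1 + (1 / 3 : ℝ) ^ (2 * k + 1)) * dirichletBeta (2 * k + 1)) <
      ∑ j ∈ range (k + 1), dirichletBeta (2 * j + 1) * dirichletBeta (2 * (k - j) + 1) := by
  have hsum : π / 4 + k - 1 / 24 ≤ ∑ j ∈ range (k + 1), dirichletBeta (2 * j + 1) := by
    have h := sum_le_sum fun j (_ : j ∈ range k) =>
      one_sub_le_dirichletBeta (s := 2 * (j + 1) + 1) (by simp)
    rw [sum_sub_distrib] at h
    rw [sum_range_succ', mul_zero, zero_add, dirichletBeta_one]
    simp only [sum_const, card_range, nsmul_eq_mul, mul_one] at h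
    linarith [sum_one_third_pow_odd_le k]
  calc k * ((1 + (1 / 3 : ℝ) ^ (2 * k + 1)) * dirichletBeta (2 * k + 1))
      ≤ k * (1 + 2 * (1 / 5) ^ (2 * k + 1)) := by
        gcongr
        exact one_add_mul_dirichletBeta_le (by simp)
    _ ≤ k + 2 / 5 := by linarith [mul_one_fifth_pow_le k]
    _ < 2 * ∑ j ∈ range (k + 1), dirichletBeta (2 * j + 1) - (k + 1) := by
        linarith [Real.pi_gt_three]
    _ ≤ _ := two_mul_sum_sub_le_sum_mul_flip
        fun j _ => dirichletBeta_le_one (s := 2 * j + 1) (by simp)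

theorem sum_abs_dirichletBeta_mul_dirichletBeta_div_sub_lt {k : ℕ} (hk : k ≠ 0) :
    ∑ j ∈ range (k + 1), |dirichletBeta (2 * j + 1) * dirichletBeta (2 * (k - j) + 1) /
        (1 + (1 / 3) ^ (2 * k + 1)) - dirichletBeta (2 * k + 1)| < dirichletBeta (2 * k + 1) := by
  have hden : (0 : ℝ) < 1 + (1 / 3) ^ (2 * k + 1) := by positivity
  refine sum_abs_sub_lt (fun j _ => ?_) ?_
  · rw [div_le_iff₀' hden]
    calc dirichletBeta (2 * j + 1) * dirichletBeta (2 * (k - j) + 1) ≤ 1 :=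
          mul_le_one₀ (dirichletBeta_le_one (by simp)) (dirichletBeta_pos (by simp)).le
            (dirichletBeta_le_one (by simp))
      _ ≤ (1 + (1 / 3) ^ (2 * k + 1)) * dirichletBeta (2 * k + 1) :=
          one_le_one_add_mul_dirichletBeta (by lia)
  · rw [← sum_div, lt_div_iff₀' hden, card_range]
    have h := mul_lt_sum_dirichletBeta_mul_dirichletBeta k
    push_cast
    linarith

theorem eulerE_two_mul_eq_dirichletBeta (k : ℕ) :
    (eulerE (2 * k) : ℝ) =
      (-1) ^ k * (2 * (2 * k)! / (π / 2) ^ (2 * k + 1) * dirichletBeta (2 * k + 1)) := by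
  rw [dirichletBeta_two_mul_add_one]
  have hsign : ((-1 : ℝ) ^ k) ^ 2 = 1 := by rw [← pow_mul, pow_mul', neg_one_sq, one_pow]
  field_simp
  rw [hsign, mul_one]

theorem pi_div_four_mul_choose_mul_eulerE_mul_eulerE {j k : ℕ} (hj : j ≤ k) :
    π / 4 * ((2 * k).choose (2 * j) * eulerE (2 * j) * eulerE (2 * k - 2 * j)) =
      (-1) ^ k * (2 * (2 * k)! / (π / 2) ^ (2 * k + 1) *
        (dirichletBeta (2 * j + 1) * dirichletBeta (2 * (k - j) + 1))) := by
  obtain ⟨i, rfl⟩ := Nat.exists_eq_add_of_le hj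
  rw [Nat.cast_choose ℝ (by lia), ← Nat.mul_sub, Nat.add_sub_cancel_left,
    eulerE_two_mul_eq_dirichletBeta, eulerE_two_mul_eq_dirichletBeta]
  field_simp
  ring

theorem three_zpow_neg_one_sub_two_mul (k : ℕ) :
    (3 : ℝ) ^ (-1 - 2 * (k : ℤ)) = (1 / 3) ^ (2 * k + 1) := by
  rw [show -1 - 2 * (k : ℤ) = -((2 * k + 1 : ℕ) : ℤ) by push_cast; ring, zpow_neg, zpow_natCast,
    one_div, inv_pow]

/-- Schinzel's condition (strict form) holds for the coefficients
`A_j = C(2k,2j) E_{2j} E_{2k−2j}` of `S_k(z)`, with `c = π/(4(1+3^{−1−2k}))`. -/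
theorem schinzel_condition_for_S (k : ℕ) (hk : 1 ≤ k)
    (A : ℕ → ℝ)
    (hA : ∀ j, A j = ((Nat.choose (2 * k) (2 * j)) : ℝ) * (eulerE (2 * j) : ℝ)
      * (eulerE (2 * k - 2 * j) : ℝ))
    (c : ℝ) (hc : c = Real.pi / (4 * (1 + (3 : ℝ) ^ (-1 - 2 * (k : ℤ))))) :
    ∑ j ∈ Finset.range (k + 1), |c * A j - A k| < |A k| := by
  rw [three_zpow_neg_one_sub_two_mul] at hc
  set N : ℝ := 2 * (2 * k)! / (π / 2) ^ (2 * k + 1)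
  have hN : 0 < N := by positivity
  have hAk : A k = (-1) ^ k * (N * dirichletBeta (2 * k + 1)) := by
    simpa [eulerE_zero, eulerE_two_mul_eq_dirichletBeta] using hA k
  have hcA : ∀ j ∈ range (k + 1), c * A j = (-1) ^ k * (N * (dirichletBeta (2 * j + 1) *
      dirichletBeta (2 * (k - j) + 1) / (1 + (1 / 3) ^ (2 * k + 1)))) := fun j hj => by
    rw [hc, ← div_div, div_mul_eq_mul_div, hA,
      pi_div_four_mul_choose_mul_eulerE_mul_eulerE (mem_range_succ_iff.1 hj)]
    ring
  have hterm : ∀ j ∈ range (k + 1), |c * A j - A k| =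
      N * |dirichletBeta (2 * j + 1) * dirichletBeta (2 * (k - j) + 1) /
        (1 + (1 / 3) ^ (2 * k + 1)) - dirichletBeta (2 * k + 1)| := fun j hj => by
    rw [hcA j hj, hAk, ← mul_sub, ← mul_sub, abs_mul, abs_neg_one_pow, one_mul, abs_mul,
      abs_of_pos hN]
  rw [sum_congr rfl hterm, ← mul_sum, hAk, abs_mul, abs_neg_one_pow, one_mul,
    abs_of_pos (mul_pos hN (dirichletBeta_pos (by simp)))]
  exact mul_lt_mul_of_pos_left
    (sum_abs_dirichletBeta_mul_dirichletBeta_div_sub_lt (Nat.one_le_iff_ne_zero.1 hk)) hN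
end

section
/- Let k ≥ 2 be an integer, set A_j = ((2π)^{2k}/(2k)!) C(2k,2j+2) (1−2^{−2−2j})(1−2^{2−2k+2j}) B_{2j+2} B_{2k−2j−2} for 0 ≤ j ≤ k−2 (these are the coefficients of the reciprocal polynomial Y_k(z)/z), and set c = π²(1−2^{2−2k})/(8(1−2^{3−2k})). Then ∑_{j=0}^{k−2} |c·A_j − A_{k−2}| < |A_{k−2}|. (This is Schinzel's sufficient condition, in strict form, for the polynomial ∑_{j=0}^{k−2} A_j z^j to have all of its zeros on the unit circle and simple.) -/
/-!
Write `λ(s) = ∑ 1/(2n+1)^s`. Euler's formula for `ζ(2m)` turns the coefficients into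
`A_j = (-1)^k · 4 λ(2j+2) λ(2k-2j-2)`, while `c = λ(2) ρ` with `ρ = (2^(2k-2)-1)/(2^(2k-2)-2)`.
Since `1 ≤ λ(s) ≤ (2^s-1)/(2^s-2)`, every `ρ λ(2j+2) λ(2k-2j-2) - λ(2k-2)` is nonnegative, so the
absolute values can be dropped, and the condition becomes
`ρ ∑ λ(2j+2) λ(2k-2j-2) < k λ(2k-2)`. The sum has the closed form `(k-1/2) λ(2k)`, which is
`P² = 2(XP' + XP - P)` for the exponential generating function `P = 2X/(e^X+1)` of the Genocchi
numbers; what remains is `λ(2k) < λ(2k-2)` and an elementary estimate.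
-/

open Finset PowerSeries

open scoped Nat Real PowerSeries

section Genocchi

/-- The Genocchi numbers `G_n = 2(1-2^n)B_n`: the factors `(1-2^(-n))B_n` in the coefficients of
`Y_k` are multiples of them. -/
def genocchi (n : ℕ) : ℚ := 2 * (1 - 2 ^ n) * bernoulli n

lemma genocchi_zero : genocchi 0 = 0 := by
  simp [genocchi]

lemma genocchi_eq_zero_of_odd {n : ℕ} (hn : Odd n) (h1 : 1 < n) : genocchi n = 0 := by
  rw [genocchi, bernoulli_eq_zero_of_odd hn h1, mul_zero]

lemma exists_eq_two_mul_succ_of_genocchi_ne_zero {n : ℕ} (h1 : n ≠ 1) (hn : genocchi n ≠ 0) :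
    ∃ m, n = 2 * (m + 1) := by
  have h0 : n ≠ 0 := by
    rintro rfl
    exact hn genocchi_zero
  have heven : Even n :=
    Nat.not_odd_iff_even.1 fun hodd ↦ hn (genocchi_eq_zero_of_odd hodd (by lia))
  exact ⟨n / 2 - 1, by grind⟩

/-- The exponential generating function `2X/(e^X+1)` of the Genocchi numbers. -/
def genocchiPowerSeries : ℚ⟦X⟧ := mk fun n ↦ genocchi n / n !

lemma genocchiPowerSeries_eq_bernoulliPowerSeries_sub :
    genocchiPowerSeries = 2 * (bernoulliPowerSeries ℚ - rescale 2 (bernoulliPowerSeries ℚ)) := by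
  ext n
  rw [← map_ofNat C 2, coeff_C_mul, map_sub, coeff_rescale]
  simp only [genocchiPowerSeries, bernoulliPowerSeries, genocchi, coeff_mk, Algebra.algebraMap_self,
    RingHom.id_apply]
  ring

lemma genocchiPowerSeries_mul_exp_add_one : genocchiPowerSeries * (exp ℚ + 1) = 2 * X := by
  have hB : bernoulliPowerSeries ℚ * (exp ℚ - 1) = X := bernoulliPowerSeries_mul_exp_sub_one ℚ
  have hB₂ : rescale 2 (bernoulliPowerSeries ℚ) * (exp ℚ ^ 2 - 1) = 2 * X := by
    have h := congrArg (rescale (2 : ℚ)) hB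
    rw [map_mul, map_sub, map_one, rescale_X, map_ofNat] at h
    rwa [exp_pow_eq_rescale_exp, Nat.cast_ofNat]
  have hE : exp ℚ - 1 ≠ 0 := fun h ↦ by
    rw [h, mul_zero] at hB
    exact X_ne_zero hB.symm
  refine mul_right_cancel₀ hE ?_
  rw [genocchiPowerSeries_eq_bernoulliPowerSeries_sub]
  linear_combination 2 * (exp ℚ + 1) * hB - 2 * hB₂

lemma genocchiPowerSeries_sq :
    genocchiPowerSeries ^ 2 =
      2 * (X * d⁄dX ℚ genocchiPowerSeries + X * genocchiPowerSeries - genocchiPowerSeries) := by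
  set P := genocchiPowerSeries
  have h : P * (exp ℚ + 1) = 2 * X := genocchiPowerSeries_mul_exp_add_one
  have h' : d⁄dX ℚ P * (exp ℚ + 1) + P * exp ℚ = 2 := by
    have := congrArg (d⁄dX ℚ) h
    simp only [Derivation.leibniz, map_add, derivative_exp, derivative_one, derivative_X,
      smul_eq_mul, add_zero, mul_one, ← map_ofNat C 2, derivative_C, mul_zero] at this
    rw [← map_ofNat C 2]
    linear_combination this
  linear_combination (P + d⁄dX ℚ P) * h - P * h'

lemma sum_antidiagonal_genocchi (m : ℕ) :
    ∑ p ∈ antidiagonal (m + 1), genocchi p.1 / p.1 ! * (genocchi p.2 / p.2 !) =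
      2 * (m * (genocchi (m + 1) / (m + 1)!) + genocchi m / m !) := by
  have h := congrArg (coeff (m + 1)) genocchiPowerSeries_sq
  rw [sq, coeff_mul, ← map_ofNat C 2, coeff_C_mul, map_sub, map_add, coeff_succ_X_mul,
    coeff_succ_X_mul, coeff_derivative] at h
  simp only [genocchiPowerSeries, coeff_mk] at h
  rw [h]
  ring

lemma sum_antidiagonal_genocchi_even (n : ℕ) :
    ∑ p ∈ antidiagonal n, genocchi (2 * (p.1 + 1)) / (2 * (p.1 + 1))! *
        (genocchi (2 * (p.2 + 1)) / (2 * (p.2 + 1))!) =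
      2 * (2 * n + 3) * (genocchi (2 * (n + 2)) / (2 * (n + 2))!) := by
  have hodd : genocchi (2 * n + 3) = 0 := genocchi_eq_zero_of_odd ⟨n + 1, by ring⟩ (by lia)
  have h := sum_antidiagonal_genocchi (2 * n + 3)
  rw [hodd, zero_div, add_zero] at h
  push_cast at h
  rw [mul_assoc, show 2 * (n + 2) = 2 * n + 3 + 1 by ring, ← h]
  refine sum_of_injOn (fun p ↦ (2 * (p.1 + 1), 2 * (p.2 + 1))) ?_ ?_ ?_ fun _ _ ↦ rfl
  · rintro ⟨a, b⟩ - ⟨c, d⟩ - hp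
    grind
  · rintro ⟨a, b⟩ hp
    rw [mem_coe, HasAntidiagonal.mem_antidiagonal] at hp ⊢
    lia
  · rintro ⟨a, b⟩ hp hne
    rw [HasAntidiagonal.mem_antidiagonal] at hp
    have hzero : genocchi a = 0 ∨ genocchi b = 0 := by
      by_contra! hab
      have ha1 : a ≠ 1 := by
        rintro rfl
        exact hab.2 (by rwa [show b = 2 * n + 3 by lia])
      have hb1 : b ≠ 1 := by
        rintro rfl
        exact hab.1 (by rwa [show a = 2 * n + 3 by lia])
      obtain ⟨c, rfl⟩ := exists_eq_two_mul_succ_of_genocchi_ne_zero ha1 hab.1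
      obtain ⟨d, rfl⟩ := exists_eq_two_mul_succ_of_genocchi_ne_zero hb1 hab.2
      exact hne ⟨(c, d), mem_coe.2 (HasAntidiagonal.mem_antidiagonal.2 (by lia)), rfl⟩
    rcases hzero with h | h <;> simp [h]

end Genocchi

section DirichletLambda

/-- The Dirichlet lambda function `λ(s) = ∑ 1/(2n+1)^s` at a natural number `s`; it takes the junk
value `0` for `s ≤ 1`, where the series diverges. -/
noncomputable def dirichletLambda (s : ℕ) : ℝ := ∑' n : ℕ, 1 / (2 * n + 1 : ℝ) ^ s

variable {s : ℕ}

lemma summable_one_div_odd_pow (hs : 1 < s) :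
    Summable fun n : ℕ ↦ 1 / (2 * n + 1 : ℝ) ^ s := by
  have h := (Real.summable_one_div_nat_pow.2 hs).comp_injective
    (i := fun n : ℕ ↦ 2 * n + 1) fun a b hab ↦ by simpa using hab
  simpa [Function.comp_def] using h

lemma one_le_dirichletLambda (hs : 1 < s) : 1 ≤ dirichletLambda s := by
  simpa [dirichletLambda] using (summable_one_div_odd_pow hs).le_tsum 0 fun n _ ↦ by positivity

lemma dirichletLambda_pos (hs : 1 < s) : 0 < dirichletLambda s :=
  one_pos.trans_le (one_le_dirichletLambda hs)

lemma dirichletLambda_strictAntiOn : StrictAntiOn dirichletLambda (Set.Ioi 1) := by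
  intro s hs t ht hst
  refine Summable.tsum_lt_tsum (i := 1) (fun n ↦ ?_) ?_ (summable_one_div_odd_pow ht)
    (summable_one_div_odd_pow hs)
  · have : (1 : ℝ) ≤ 2 * n + 1 := by linarith [n.cast_nonneg (α := ℝ)]
    gcongr
  · have : (1 : ℝ) < 2 * (1 : ℕ) + 1 := by norm_num
    gcongr

lemma hasSum_one_div_even_pow (hs : 1 < s) :
    HasSum (fun n : ℕ ↦ 1 / (2 * n : ℝ) ^ s) ((∑' n : ℕ, 1 / (n : ℝ) ^ s) / 2 ^ s) := by
  refine ((Real.summable_one_div_nat_pow.2 hs).hasSum.div_const (2 ^ s)).congr_fun fun n ↦ ?_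
  rw [mul_pow, div_div, mul_comm]

lemma dirichletLambda_eq_mul_tsum (hs : 1 < s) :
    dirichletLambda s = (1 - 1 / 2 ^ s) * ∑' n : ℕ, 1 / (n : ℝ) ^ s := by
  have h : HasSum (fun n : ℕ ↦ 1 / (n : ℝ) ^ s)
      ((∑' n : ℕ, 1 / (n : ℝ) ^ s) / 2 ^ s + dirichletLambda s) :=
    HasSum.even_add_odd (by simpa using hasSum_one_div_even_pow hs)
      (by simpa [dirichletLambda] using (summable_one_div_odd_pow hs).hasSum)
  linear_combination -h.tsum_eq

lemma dirichletLambda_le_one_add (hs : 1 < s) :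
    dirichletLambda s ≤ 1 + (∑' n : ℕ, 1 / (n : ℝ) ^ s) / 2 ^ s := by
  have hodd := summable_one_div_odd_pow hs
  have heven := hasSum_one_div_even_pow hs
  rw [dirichletLambda, hodd.tsum_eq_zero_add, ← heven.tsum_eq, heven.summable.tsum_eq_zero_add]
  have hle : ∑' n : ℕ, 1 / (2 * (n + 1 : ℕ) + 1 : ℝ) ^ s ≤
      ∑' n : ℕ, 1 / (2 * (n + 1 : ℕ) : ℝ) ^ s :=
    ((summable_nat_add_iff 1).2 hodd).tsum_le_tsum
      (fun n ↦ by gcongr; linarith) ((summable_nat_add_iff 1).2 heven.summable)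
  simpa [show s ≠ 0 by lia] using hle

/-- The upper bound for `λ(s)` obtained by comparing `1/(2n+1)^s` with `1/(2n)^s`; Schinzel's
constant is `c = λ(2) * dirichletLambdaMajorant (2k-2)`. -/
noncomputable def dirichletLambdaMajorant (s : ℕ) : ℝ := (2 ^ s - 1) / (2 ^ s - 2)

lemma dirichletLambda_le_dirichletLambdaMajorant (hs : 1 < s) :
    dirichletLambda s ≤ dirichletLambdaMajorant s := by
  have hpow : (2 : ℝ) < 2 ^ s := by simpa using pow_lt_pow_right₀ (one_lt_two (α := ℝ)) hs
  have hζ := dirichletLambda_eq_mul_tsum hs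
  have hle := dirichletLambda_le_one_add hs
  set Z := ∑' n : ℕ, 1 / (n : ℝ) ^ s
  have hZ : (2 ^ s - 1) * (Z / 2 ^ s) = dirichletLambda s := by
    rw [hζ]
    field_simp
  rw [dirichletLambdaMajorant, le_div_iff₀ (by linarith)]
  have hmul := mul_le_mul_of_nonneg_left hle (by linarith : (0 : ℝ) ≤ 2 ^ s - 1)
  linear_combination hmul + hZ

lemma dirichletLambda_two_mul {m : ℕ} (hm : m ≠ 0) :
    dirichletLambda (2 * m) =
      (-1) ^ m * π ^ (2 * m) / 4 * (genocchi (2 * m) / (2 * m)! : ℚ) := by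
  have h2 : (2 : ℝ) ^ (2 * m) = 2 * 2 ^ (2 * m - 1) := by
    rw [← pow_succ']
    congr 1
    lia
  rw [dirichletLambda_eq_mul_tsum (by lia), (hasSum_zeta_nat hm).tsum_eq, genocchi]
  push_cast
  rw [h2]
  field_simp
  ring

lemma dirichletLambda_two : dirichletLambda 2 = π ^ 2 / 8 := by
  rw [dirichletLambda_eq_mul_tsum one_lt_two, hasSum_zeta_two.tsum_eq]
  ring

lemma sum_antidiagonal_dirichletLambda (n : ℕ) :
    ∑ p ∈ antidiagonal n, dirichletLambda (2 * (p.1 + 1)) * dirichletLambda (2 * (p.2 + 1)) =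
      (n + 3 / 2) * dirichletLambda (2 * (n + 2)) := by
  have hterm : ∀ p ∈ antidiagonal n,
      dirichletLambda (2 * (p.1 + 1)) * dirichletLambda (2 * (p.2 + 1)) =
        (-1) ^ n * π ^ (2 * (n + 2)) / 16 * (genocchi (2 * (p.1 + 1)) / (2 * (p.1 + 1))! *
          (genocchi (2 * (p.2 + 1)) / (2 * (p.2 + 1))!) : ℚ) := by
    rintro ⟨a, b⟩ hp
    rw [HasAntidiagonal.mem_antidiagonal] at hp
    rw [dirichletLambda_two_mul (by lia), dirichletLambda_two_mul (by lia), ← hp]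
    push_cast
    ring
  rw [sum_congr rfl hterm, ← mul_sum, ← Rat.cast_sum, sum_antidiagonal_genocchi_even,
    dirichletLambda_two_mul (by lia)]
  push_cast
  ring

end DirichletLambda

section SchinzelCondition

lemma two_mul_add_five_le_four_pow {n : ℕ} (hn : n ≠ 0) : 2 * n + 5 ≤ 4 ^ (n + 1) := by
  obtain ⟨m, rfl⟩ := Nat.exists_eq_succ_of_ne_zero hn
  have hm : m < 4 ^ m := Nat.lt_pow_self (by norm_num)
  rw [Nat.succ_eq_add_one, add_assoc, pow_add]
  lia

lemma dirichletLambdaMajorant_mul_sum_lt (n : ℕ) :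
    dirichletLambdaMajorant (2 * (n + 1)) * ∑ p ∈ antidiagonal n,
        dirichletLambda (2 * (p.1 + 1)) * dirichletLambda (2 * (p.2 + 1)) <
      (n + 2) * dirichletLambda (2 * (n + 1)) := by
  rcases eq_or_ne n 0 with rfl | hn
  · have hπ : π ^ 2 < 32 / 3 := by nlinarith [Real.pi_lt_d2, Real.pi_pos]
    norm_num [dirichletLambdaMajorant, dirichletLambda_two]
    nlinarith [sq_pos_of_pos Real.pi_pos]
  have hpow : 2 * (n : ℝ) + 5 ≤ 2 ^ (2 * (n + 1)) := by
    rw [pow_mul]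
    exact_mod_cast two_mul_add_five_le_four_pow hn
  have hcoef : dirichletLambdaMajorant (2 * (n + 1)) * (n + 3 / 2) ≤ n + 2 := by
    rw [dirichletLambdaMajorant, div_mul_eq_mul_div, div_le_iff₀ (by linarith)]
    linarith
  have hanti : dirichletLambda (2 * (n + 2)) < dirichletLambda (2 * (n + 1)) :=
    dirichletLambda_strictAntiOn (Set.mem_Ioi.2 (by lia)) (Set.mem_Ioi.2 (by lia)) (by lia)
  calc _ = dirichletLambdaMajorant (2 * (n + 1)) * (n + 3 / 2) * dirichletLambda (2 * (n + 2)) := by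
        rw [sum_antidiagonal_dirichletLambda, mul_assoc]
    _ ≤ (n + 2) * dirichletLambda (2 * (n + 2)) :=
        mul_le_mul_of_nonneg_right hcoef (dirichletLambda_pos (by lia)).le
    _ < (n + 2) * dirichletLambda (2 * (n + 1)) := by gcongr

lemma sum_abs_dirichletLambdaMajorant_mul_sub_lt (n : ℕ) :
    ∑ p ∈ antidiagonal n, |dirichletLambdaMajorant (2 * (n + 1)) *
        (dirichletLambda (2 * (p.1 + 1)) * dirichletLambda (2 * (p.2 + 1))) -
          dirichletLambda (2 * (n + 1))| < dirichletLambda (2 * (n + 1)) := by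
  have hle : dirichletLambda (2 * (n + 1)) ≤ dirichletLambdaMajorant (2 * (n + 1)) :=
    dirichletLambda_le_dirichletLambdaMajorant (by lia)
  have hnonneg : 0 ≤ dirichletLambdaMajorant (2 * (n + 1)) :=
    (dirichletLambda_pos (by lia)).le.trans hle
  have hterm : ∀ p ∈ antidiagonal n, 0 ≤ dirichletLambdaMajorant (2 * (n + 1)) *
      (dirichletLambda (2 * (p.1 + 1)) * dirichletLambda (2 * (p.2 + 1))) -
        dirichletLambda (2 * (n + 1)) := fun p _ ↦
    sub_nonneg.2 <| hle.trans <| le_mul_of_one_le_right hnonneg <|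
      one_le_mul_of_one_le_of_one_le (one_le_dirichletLambda (by lia))
        (one_le_dirichletLambda (by lia))
  rw [sum_congr rfl fun p hp ↦ abs_of_nonneg (hterm p hp), sum_sub_distrib, ← mul_sum, sum_const,
    Nat.card_antidiagonal, nsmul_eq_mul]
  push_cast
  linarith [dirichletLambdaMajorant_mul_sum_lt n]

lemma one_sub_two_zpow_mul_bernoulli (m : ℕ) :
    (1 - (2 : ℝ) ^ (-(m : ℤ))) * bernoulli m = -genocchi m / 2 ^ (m + 1) := by
  rw [zpow_neg, zpow_natCast, genocchi]
  push_cast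
  field_simp
  ring

lemma choose_mul_bernoulli_mul_bernoulli_eq_dirichletLambda {a b : ℕ} (ha : a ≠ 0) (hb : b ≠ 0) :
    (2 * π) ^ (2 * (a + b)) / (2 * (a + b))! * (2 * (a + b)).choose (2 * a) *
        (1 - (2 : ℝ) ^ (-((2 * a : ℕ) : ℤ))) * (1 - (2 : ℝ) ^ (-((2 * b : ℕ) : ℤ))) *
        bernoulli (2 * a) * bernoulli (2 * b) =
      (-1) ^ (a + b) * 4 * (dirichletLambda (2 * a) * dirichletLambda (2 * b)) := by
  have hsign : ((-1 : ℝ) ^ (a + b)) ^ 2 = 1 := by rw [← pow_mul, mul_comm, pow_mul]; norm_num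
  calc _ = (2 * π) ^ (2 * (a + b)) / (2 * (a + b))! * (2 * (a + b)).choose (2 * a) *
        ((1 - (2 : ℝ) ^ (-((2 * a : ℕ) : ℤ))) * bernoulli (2 * a)) *
        ((1 - (2 : ℝ) ^ (-((2 * b : ℕ) : ℤ))) * bernoulli (2 * b)) := by ring
    _ = π ^ (2 * (a + b)) / 4 * (genocchi (2 * a) / (2 * a)! : ℚ) *
        (genocchi (2 * b) / (2 * b)! : ℚ) := by
      rw [one_sub_two_zpow_mul_bernoulli, one_sub_two_zpow_mul_bernoulli, mul_add 2 a b,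
        Nat.cast_add_choose]
      push_cast
      field_simp
      ring
    _ = _ := by
      rw [dirichletLambda_two_mul ha, dirichletLambda_two_mul hb]
      linear_combination (-(π ^ (2 * (a + b)) / 4 * (genocchi (2 * a) / (2 * a)! : ℚ) *
        (genocchi (2 * b) / (2 * b)! : ℚ))) * hsign

lemma dirichletLambda_two_mul_dirichletLambdaMajorant (s : ℕ) :
    dirichletLambda 2 * dirichletLambdaMajorant s =
      π ^ 2 * (1 - (2 : ℝ) ^ (-(s : ℤ))) / (8 * (1 - (2 : ℝ) ^ (1 - (s : ℤ)))) := by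
  have hnum : (2 : ℝ) ^ s - 1 = 2 ^ s * (1 - 2 ^ (-(s : ℤ))) := by
    rw [zpow_neg, zpow_natCast]
    field_simp
  have hden : (2 : ℝ) ^ s - 2 = 2 ^ s * (1 - 2 ^ (1 - (s : ℤ))) := by
    rw [zpow_sub₀ two_ne_zero, zpow_one, zpow_natCast]
    field_simp
  rw [dirichletLambda_two, dirichletLambdaMajorant, hnum, hden,
    mul_div_mul_left _ _ (by positivity), div_mul_div_comm]

/-- The coefficient `A_j` of `z^j` in `Y_k(z)/z`. -/
noncomputable def schinzelCoeff (k j : ℕ) : ℝ :=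
  (2 * π) ^ (2 * k) / (2 * k)! * (2 * k).choose (2 * j + 2) * (1 - (2 : ℝ) ^ (-2 - 2 * (j : ℤ))) *
    (1 - (2 : ℝ) ^ (2 - 2 * (k : ℤ) + 2 * j)) * bernoulli (2 * j + 2) *
    bernoulli (2 * k - 2 * j - 2)

/-- The multiplier `c` at which Schinzel's condition is tested. -/
noncomputable def schinzelConst (k : ℕ) : ℝ :=
  π ^ 2 * (1 - (2 : ℝ) ^ (2 - 2 * (k : ℤ))) / (8 * (1 - (2 : ℝ) ^ (3 - 2 * (k : ℤ))))

lemma schinzelCoeff_eq_dirichletLambda (a b : ℕ) :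
    schinzelCoeff (a + b + 2) a =
      (-1) ^ (a + b) * 4 * (dirichletLambda (2 * (a + 1)) * dirichletLambda (2 * (b + 1))) := by
  have h := choose_mul_bernoulli_mul_bernoulli_eq_dirichletLambda a.succ_ne_zero b.succ_ne_zero
  have hindex : 2 * (a + b + 2) - 2 * a - 2 = 2 * (b + 1) := by lia
  have ha : (-2 - 2 * (a : ℤ)) = -((2 * (a + 1) : ℕ) : ℤ) := by
    push_cast
    ring
  have hb : (2 - 2 * ((a + b + 2 : ℕ) : ℤ) + 2 * a) = -((2 * (b + 1) : ℕ) : ℤ) := by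
    push_cast
    ring
  rw [Nat.succ_eq_add_one, Nat.succ_eq_add_one, show a + 1 + (b + 1) = a + b + 2 by lia] at h
  rw [schinzelCoeff, hindex, ha, hb, ← mul_add_one 2 a, h, pow_add _ (a + b) 2, neg_one_sq, mul_one]

lemma schinzelConst_eq_dirichletLambda (n : ℕ) :
    schinzelConst (n + 2) = dirichletLambda 2 * dirichletLambdaMajorant (2 * (n + 1)) := by
  have h₂ : (2 - 2 * ((n + 2 : ℕ) : ℤ)) = -((2 * (n + 1) : ℕ) : ℤ) := by
    push_cast
    ring
  have h₃ : (3 - 2 * ((n + 2 : ℕ) : ℤ)) = 1 - ((2 * (n + 1) : ℕ) : ℤ) := by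
    push_cast
    ring
  rw [schinzelConst, dirichletLambda_two_mul_dirichletLambdaMajorant, h₂, h₃]

lemma abs_schinzelCoeff_last (n : ℕ) :
    |schinzelCoeff (n + 2) n| = 4 * dirichletLambda 2 * dirichletLambda (2 * (n + 1)) := by
  rw [schinzelCoeff_eq_dirichletLambda n 0, abs_mul, abs_mul, abs_neg_one_pow, one_mul,
    zero_add, mul_one, abs_of_pos four_pos,
    abs_of_pos (mul_pos (dirichletLambda_pos (by lia)) (dirichletLambda_pos one_lt_two))]
  ring

lemma abs_schinzelConst_mul_schinzelCoeff_sub (a b : ℕ) :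
    |schinzelConst (a + b + 2) * schinzelCoeff (a + b + 2) a -
        schinzelCoeff (a + b + 2) (a + b)| =
      4 * dirichletLambda 2 * |dirichletLambdaMajorant (2 * (a + b + 1)) *
        (dirichletLambda (2 * (a + 1)) * dirichletLambda (2 * (b + 1))) -
          dirichletLambda (2 * (a + b + 1))| := by
  have hfactor : schinzelConst (a + b + 2) * schinzelCoeff (a + b + 2) a -
      schinzelCoeff (a + b + 2) (a + b) = (-1) ^ (a + b) * (4 * dirichletLambda 2 *
        (dirichletLambdaMajorant (2 * (a + b + 1)) *
          (dirichletLambda (2 * (a + 1)) * dirichletLambda (2 * (b + 1))) -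
            dirichletLambda (2 * (a + b + 1)))) := by
    rw [schinzelConst_eq_dirichletLambda, schinzelCoeff_eq_dirichletLambda a b,
      schinzelCoeff_eq_dirichletLambda (a + b) 0, add_zero, zero_add, mul_one]
    ring
  rw [hfactor, abs_mul, abs_neg_one_pow, one_mul, abs_mul,
    abs_of_pos (mul_pos four_pos (dirichletLambda_pos one_lt_two))]

end SchinzelCondition

/-- Schinzel's condition (strict form) holds for the coefficients
`A_j = ((2π)^{2k}/(2k)!) C(2k,2j+2)(1−2^{−2−2j})(1−2^{2−2k+2j}) B_{2j+2} B_{2k−2j−2}`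
of the reciprocal polynomial `Y_k(z)/z`, with `c = π²(1−2^{2−2k})/(8(1−2^{3−2k}))`. -/
theorem schinzel_condition_for_Y (k : ℕ) (hk : 2 ≤ k)
    (A : ℕ → ℝ)
    (hA : ∀ j, A j = (2 * Real.pi) ^ (2 * k) / (Nat.factorial (2 * k))
      * ((Nat.choose (2 * k) (2 * j + 2)) : ℝ)
      * (1 - (2 : ℝ) ^ (-2 - 2 * (j : ℤ))) * (1 - (2 : ℝ) ^ (2 - 2 * (k : ℤ) + 2 * j))
      * ((bernoulli (2 * j + 2) : ℚ) : ℝ) * ((bernoulli (2 * k - 2 * j - 2) : ℚ) : ℝ))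
    (c : ℝ)
    (hc : c = Real.pi ^ 2 * (1 - (2 : ℝ) ^ (2 - 2 * (k : ℤ)))
      / (8 * (1 - (2 : ℝ) ^ (3 - 2 * (k : ℤ))))) :
    ∑ j ∈ Finset.range (k - 1), |c * A j - A (k - 2)| < |A (k - 2)| := by
  obtain ⟨n, rfl⟩ := Nat.exists_eq_add_of_le' hk
  obtain rfl : A = schinzelCoeff (n + 2) := funext hA
  obtain rfl : c = schinzelConst (n + 2) := hc
  set f : ℕ × ℕ → ℝ := fun p ↦
    |schinzelConst (n + 2) * schinzelCoeff (n + 2) p.1 - schinzelCoeff (n + 2) n|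
  have hf : ∀ p ∈ antidiagonal n, f p = 4 * dirichletLambda 2 *
      |dirichletLambdaMajorant (2 * (n + 1)) *
        (dirichletLambda (2 * (p.1 + 1)) * dirichletLambda (2 * (p.2 + 1))) -
          dirichletLambda (2 * (n + 1))| := by
    rintro ⟨a, b⟩ hp
    obtain rfl : a + b = n := HasAntidiagonal.mem_antidiagonal.1 hp
    exact abs_schinzelConst_mul_schinzelCoeff_sub a b
  have hpos : 0 < 4 * dirichletLambda 2 := mul_pos four_pos (dirichletLambda_pos one_lt_two)
  calc ∑ j ∈ range (n + 1), f (j, n - j)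
    _ = ∑ p ∈ antidiagonal n, f p := (Nat.sum_antidiagonal_eq_sum_range_succ_mk f n).symm
    _ < 4 * dirichletLambda 2 * dirichletLambda (2 * (n + 1)) := by
        rw [sum_congr rfl hf, ← mul_sum]
        exact mul_lt_mul_of_pos_left (sum_abs_dirichletLambdaMajorant_mul_sub_lt n) hpos
    _ = |schinzelCoeff (n + 2) n| := (abs_schinzelCoeff_last n).symm
end
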